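/- Let Z = max_{1≤k≤K} Y_k as above. Then the expected maximum satisfies E[Z] = ∫_0^∞ K t ∫_0^∞ [r^{N-1} exp(-r/2)/(2^{N+1} Γ(N))] [1 - Q_N(√((μ²/(1-μ²))r), √t)]^{K-1} [Q_N(√((μ²/(1-μ²))r), √t) - Q_{N-1}(√((μ²/(1-μ²))r), √t)] dr dt, provided Z is integrable. -/

import Mathlib

open MeasureTheory ProbabilityTheory Real Set Filter

/-- Modified Bessel function of the first kind of (integer) order `n`. -/
noncomputable def besselI (n : ℕ) (x : ℝ) : ℝ :=
  ∑' m : ℕ, (x / 2) ^ (2 * m + n) / ((Nat.factorial m : ℝ) * (Nat.factorial (m + n)))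

/-- `N`-th order Marcum Q-function, `Q_N(a,b) = ∫_b^∞ x (x/a)^{N-1} e^{-(x²+a²)/2} I_{N-1}(ax) dx`,
with its continuous extension (the regularized upper incomplete gamma tail) at `a = 0`. -/
noncomputable def marcumQ (N : ℕ) (a b : ℝ) : ℝ :=
  if a = 0 then
    ∫ x in Ioi b, x ^ (2 * N - 1) * Real.exp (-(x ^ 2) / 2) /
      (2 ^ (N - 1) * (Nat.factorial (N - 1) : ℝ))
  else
    ∫ x in Ioi b, x * (x / a) ^ (N - 1) * Real.exp (-(x ^ 2 + a ^ 2) / 2)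
      * besselI (N - 1) (a * x)

/-- Density of the noncentral chi-squared distribution with `2N` degrees of freedom and
noncentrality `lam` (for `lam = 0` it is the central chi-squared density with `2N` dof). -/
noncomputable def ncChiSqPdf (N : ℕ) (lam h : ℝ) : ℝ :=
  if lam = 0 then h ^ (N - 1) * Real.exp (-h / 2) / (2 ^ N * Real.Gamma N)
  else (1 / 2) * (h / lam) ^ (((N : ℝ) - 1) / 2) * Real.exp (-(h + lam) / 2)
      * besselI (N - 1) (Real.sqrt (lam * h))

/-- Noncentral chi-squared distribution with `2N` degrees of freedom and noncentrality `lam`. -/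
noncomputable def ncChiSq (N : ℕ) (lam : ℝ) : Measure ℝ :=
  volume.withDensity fun h => ENNReal.ofReal (if 0 < h then ncChiSqPdf N lam h else 0)


/-! ### Series representation -/

noncomputable def gp (n : ℕ) (t : ℝ) : ℝ :=
  t ^ n * Real.exp (-t / 2) / (2 ^ (n + 1) * (Nat.factorial n : ℝ))

noncomputable def pw (l : ℝ) (m : ℕ) : ℝ := Real.exp (-l / 2) * ((l / 2) ^ m / (Nat.factorial m : ℝ))

noncomputable def pq (n : ℕ) (l t : ℝ) : ℝ := ∑' m : ℕ, pw l m * gp (n + m) t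

lemma gp_nonneg (n : ℕ) {t : ℝ} (ht : 0 ≤ t) : 0 ≤ gp n t := by unfold gp; positivity

lemma pw_nonneg {l : ℝ} (hl : 0 ≤ l) (m : ℕ) : 0 ≤ pw l m := by unfold pw; positivity

lemma pw_hasSum (l : ℝ) : HasSum (pw l) 1 := by
  have h := (NormedSpace.expSeries_div_hasSum_exp (l / 2)).mul_left (Real.exp (-l / 2))
  rw [← Real.exp_eq_exp_ℝ, ← Real.exp_add] at h
  have e : -l / 2 + l / 2 = 0 := by ring
  rw [e, Real.exp_zero] at h
  exact h

lemma gp_cont (n : ℕ) : Continuous (gp n) := by unfold gp; fun_prop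

lemma gp_abs_le (n : ℕ) {R t : ℝ} (ht : |t| ≤ R) :
    |gp n t| ≤ Real.exp (R / 2) * Real.exp (R / 2) := by
  have hR : 0 ≤ R := (abs_nonneg t).trans ht
  unfold gp
  rw [abs_div, abs_mul, abs_pow, Real.abs_exp, abs_of_pos (by positivity : (0:ℝ) < 2 ^ (n + 1) * (Nat.factorial n : ℝ))]
  have h1 : Real.exp (-t / 2) ≤ Real.exp (R / 2) := by
    apply Real.exp_le_exp.2; have := neg_abs_le t; linarith
  have h2 : |t| ^ n / (2 ^ (n + 1) * (Nat.factorial n : ℝ)) ≤ Real.exp (R / 2) := by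
    have h3 := Real.pow_div_factorial_le_exp (R / 2) (by positivity) n
    refine le_trans ?_ h3
    rw [div_pow, div_div]
    gcongr
    · norm_num
    · omega
  calc |t| ^ n * Real.exp (-t / 2) / (2 ^ (n + 1) * (Nat.factorial n : ℝ))
      = (|t| ^ n / (2 ^ (n + 1) * (Nat.factorial n : ℝ))) * Real.exp (-t / 2) := by ring
    _ ≤ _ := by gcongr

lemma pq_term_bound (n m : ℕ) {R l t : ℝ} (hl : |l| ≤ R) (ht : |t| ≤ R) :
    ‖pw l m * gp (n + m) t‖ ≤
      (Real.exp (R / 2) * (Real.exp (R / 2) * Real.exp (R / 2))) * ((R / 2) ^ m / (Nat.factorial m : ℝ)) := by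
  have hR : 0 ≤ R := (abs_nonneg t).trans ht
  rw [Real.norm_eq_abs, abs_mul]
  have h1 := gp_abs_le (n + m) ht
  have h2 : |pw l m| ≤ Real.exp (R / 2) * ((R / 2) ^ m / (Nat.factorial m : ℝ)) := by
    unfold pw
    rw [abs_mul, Real.abs_exp, abs_div, abs_pow, abs_div, Nat.abs_cast, abs_two]
    gcongr
    have := neg_abs_le l; linarith
  calc |pw l m| * |gp (n + m) t| ≤ (Real.exp (R / 2) * ((R / 2) ^ m / (Nat.factorial m : ℝ))) *
        (Real.exp (R / 2) * Real.exp (R / 2)) := by gcongr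
    _ = _ := by ring

lemma pq_summable (n : ℕ) (l t : ℝ) : Summable (fun m => pw l m * gp (n + m) t) :=
  Summable.of_norm_bounded ((Real.summable_pow_div_factorial (max |l| |t| / 2)).mul_left _)
    (fun m => pq_term_bound n m (le_max_left _ _) (le_max_right _ _))

lemma pq_cont (n : ℕ) : Continuous (fun z : ℝ × ℝ => pq n z.1 z.2) := by
  rw [continuous_iff_continuousAt]
  intro z
  have h : ContinuousOn (fun z : ℝ × ℝ => pq n z.1 z.2) (Metric.ball 0 (‖z‖ + 1)) := by
    unfold pq
    refine continuousOn_tsum ?_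
      ((Real.summable_pow_div_factorial ((‖z‖ + 1) / 2)).mul_left
        (Real.exp ((‖z‖ + 1) / 2) * (Real.exp ((‖z‖ + 1) / 2) * Real.exp ((‖z‖ + 1) / 2)))) ?_
    · intro m
      have := gp_cont (n + m)
      unfold pw
      fun_prop
    · intro m x hx
      have hx' : ‖x‖ ≤ ‖z‖ + 1 := by simpa using (mem_ball_zero_iff.1 hx).le
      exact pq_term_bound n m ((norm_fst_le x).trans hx') ((norm_snd_le x).trans hx')
  exact h.continuousAt (Metric.isOpen_ball.mem_nhds (by simp))

lemma pq_cont' (n : ℕ) (l : ℝ) : Continuous (pq n l) :=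
  (pq_cont n).comp (by fun_prop : Continuous fun t : ℝ => (l, t))

lemma pq_nonneg (n : ℕ) {l t : ℝ} (hl : 0 ≤ l) (ht : 0 ≤ t) : 0 ≤ pq n l t :=
  tsum_nonneg fun m => mul_nonneg (pw_nonneg hl m) (gp_nonneg _ ht)

lemma gp_int_one (n : ℕ) : ∫ t in Ioi 0, gp n t = 1 := by
  have h := Real.integral_rpow_mul_exp_neg_mul_Ioi (a := (n : ℝ) + 1) (r := 1 / 2) (by positivity) (by norm_num)
  have h2 : ∫ t in Ioi 0, gp n t = ∫ t in Ioi (0:ℝ), (1 / (2 ^ (n + 1) * (Nat.factorial n : ℝ))) *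
      (t ^ ((n : ℝ) + 1 - 1) * Real.exp (-(1 / 2 * t))) := by
    refine setIntegral_congr_fun measurableSet_Ioi fun t _ => ?_
    simp only [gp, add_sub_cancel_right, Real.rpow_natCast]
    rw [show -(1 / 2 * t) = -t / 2 by ring]; ring
  rw [h2, integral_const_mul, h, Real.Gamma_nat_eq_factorial]
  rw [show ((1:ℝ) / (1 / 2)) = 2 by norm_num, ← Nat.cast_succ, Real.rpow_natCast]
  have := Nat.factorial_ne_zero n
  field_simp

lemma gp_int (n : ℕ) : IntegrableOn (gp n) (Ioi 0) := by
  by_contra h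
  have := integral_undef h
  rw [gp_int_one] at this
  exact one_ne_zero this

lemma gp_int' (n : ℕ) {t : ℝ} (ht : 0 ≤ t) : IntegrableOn (gp n) (Ioi t) :=
  (gp_int n).mono_set (Ioi_subset_Ioi ht)

lemma gp_tail_nonneg (n : ℕ) {t : ℝ} (ht : 0 ≤ t) : 0 ≤ ∫ s in Ioi t, gp n s :=
  setIntegral_nonneg measurableSet_Ioi fun s hs => gp_nonneg n (ht.trans (le_of_lt hs))

lemma gp_tail_le (n : ℕ) {t : ℝ} (ht : 0 ≤ t) : ∫ s in Ioi t, gp n s ≤ 1 := by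
  rw [← gp_int_one n]
  refine setIntegral_mono_set (gp_int n) ?_ (Ioi_subset_Ioi ht).eventuallyLE
  exact (ae_restrict_iff' measurableSet_Ioi).2 (ae_of_all _ fun _ hs => gp_nonneg n (le_of_lt hs))

lemma gp_rec (n : ℕ) {t : ℝ} (ht : 0 ≤ t) :
    (∫ s in Ioi t, gp (n + 1) s) - ∫ s in Ioi t, gp n s = 2 * gp (n + 1) t := by
  have hd : ∀ x ∈ Ici t, HasDerivAt (fun x => -2 * gp (n + 1) x) (gp (n + 1) x - gp n x) x := by
    intro x _
    have h1 : HasDerivAt (fun x : ℝ => Real.exp (-x / 2)) (Real.exp (-x / 2) * (-1 / 2)) x :=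
      ((hasDerivAt_id x).neg.div_const 2).exp
    have h := ((((hasDerivAt_id x).pow (n + 1)).mul h1).div_const
      (2 ^ (n + 1 + 1) * (Nat.factorial (n + 1) : ℝ))).const_mul (-2)
    refine h.congr_deriv ?_
    simp only [gp, id, Nat.factorial_succ, Pi.pow_apply]
    push_cast
    have h3 := Nat.factorial_ne_zero n
    have h4 : (n : ℝ) + 1 ≠ 0 := by positivity
    field_simp
    ring
  have ht0 : Tendsto (fun x => -2 * gp (n + 1) x) atTop (nhds 0) := by
    have h1 := (tendsto_pow_mul_exp_neg_atTop_nhds_zero (n + 1)).comp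
      (tendsto_id.atTop_div_const (r := (2:ℝ)) (by norm_num))
    have h2 := h1.const_mul (-(1 / (Nat.factorial (n + 1) : ℝ)))
    rw [mul_zero] at h2
    refine h2.congr fun x => ?_
    simp only [gp, Function.comp, id, neg_div, div_pow]
    field_simp
    ring
  have := integral_Ioi_of_hasDerivAt_of_tendsto' hd ((gp_int' (n + 1) ht).sub (gp_int' n ht)) ht0
  rw [integral_sub (gp_int' (n + 1) ht) (gp_int' n ht)] at this
  rw [this]; ring

lemma pq_tail_hasSum (n : ℕ) {l t : ℝ} (hl : 0 ≤ l) (ht : 0 ≤ t) :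
    HasSum (fun m => pw l m * ∫ s in Ioi t, gp (n + m) s) (∫ s in Ioi t, pq n l s) := by
  have h := hasSum_integral_of_summable_integral_norm (μ := volume.restrict (Ioi t))
    (F := fun m s => pw l m * gp (n + m) s) (fun m => (gp_int' (n + m) ht).const_mul _) ?_
  · simp only [integral_const_mul] at h
    exact h
  · have e : ∀ m, ∫ s in Ioi t, ‖pw l m * gp (n + m) s‖ = pw l m * ∫ s in Ioi t, gp (n + m) s := by
      intro m
      rw [← integral_const_mul]
      refine setIntegral_congr_fun measurableSet_Ioi fun s hs => ?_
      exact Real.norm_of_nonneg (mul_nonneg (pw_nonneg hl m) (gp_nonneg _ (ht.trans (le_of_lt hs))))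
    simp only [e]
    refine Summable.of_nonneg_of_le (fun m => mul_nonneg (pw_nonneg hl m) (gp_tail_nonneg _ ht))
      (fun m => ?_) (pw_hasSum l).summable
    exact mul_le_of_le_one_right (pw_nonneg hl m) (gp_tail_le _ ht)

lemma pq_int_one (n : ℕ) {l : ℝ} (hl : 0 ≤ l) : ∫ s in Ioi 0, pq n l s = 1 := by
  have h := pq_tail_hasSum n hl le_rfl
  simp only [gp_int_one, mul_one] at h
  exact h.unique (pw_hasSum l)

lemma pq_int (n : ℕ) {l : ℝ} (hl : 0 ≤ l) : IntegrableOn (pq n l) (Ioi 0) := by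
  by_contra h
  have := integral_undef h
  rw [pq_int_one n hl] at this
  exact one_ne_zero this

lemma pq_rec (n : ℕ) {l t : ℝ} (hl : 0 ≤ l) (ht : 0 ≤ t) :
    (∫ s in Ioi t, pq (n + 1) l s) - ∫ s in Ioi t, pq n l s = 2 * pq (n + 1) l t := by
  have h := (pq_tail_hasSum (n + 1) hl ht).sub (pq_tail_hasSum n hl ht)
  have h2 := (pq_summable (n + 1) l t).hasSum.mul_left 2
  refine h.unique (h2.congr_fun ?_)
  intro m
  rw [← mul_sub, show n + 1 + m = n + m + 1 by ring, gp_rec _ ht]; ring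

lemma bessel_eq (n : ℕ) {a x : ℝ} (ha : 0 < a) (hx : 0 < x) :
    (x / a) ^ n * Real.exp (-(x ^ 2 + a ^ 2) / 2) * besselI n (a * x) = 2 * pq n (a ^ 2) (x ^ 2) := by
  unfold besselI pq
  rw [← tsum_mul_left, ← tsum_mul_left]
  congr 1; ext m
  simp only [pw, gp]
  rw [show -(x ^ 2 + a ^ 2) / 2 = -a ^ 2 / 2 + -x ^ 2 / 2 by ring, Real.exp_add, Nat.add_comm m n]
  have h1 := Nat.factorial_ne_zero m
  have h2 := Nat.factorial_ne_zero (n + m)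
  simp only [div_pow, mul_pow, pow_add, pow_mul]
  field_simp
  simp only [← pow_mul]
  ring_nf

lemma pq_zero (n : ℕ) (t : ℝ) : pq n 0 t = gp n t := by
  unfold pq
  rw [tsum_eq_single 0]
  · simp [pw]
  · intro m hm; simp [pw, hm]

lemma marcum_eq (n : ℕ) {l t : ℝ} (hl : 0 ≤ l) (ht : 0 ≤ t) :
    marcumQ (n + 1) (Real.sqrt l) (Real.sqrt t) = ∫ s in Ioi t, pq n l s := by
  have him : (fun x : ℝ => x ^ 2) '' Ioi (Real.sqrt t) = Ioi t := by
    ext y; constructor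
    · rintro ⟨x, hx, rfl⟩
      exact (Real.sqrt_lt' ((Real.sqrt_nonneg t).trans_lt hx)).1 hx
    · intro hy
      exact ⟨Real.sqrt y, Real.sqrt_lt_sqrt ht hy, Real.sq_sqrt (ht.trans (le_of_lt hy))⟩
  have h := integral_image_eq_integral_abs_deriv_smul (s := Ioi (Real.sqrt t)) (f := fun x => x ^ 2)
    (f' := fun x => 2 * x) measurableSet_Ioi
    (fun x _ => by simpa using (hasDerivAt_pow 2 x).hasDerivWithinAt)
    (fun x hx y hy hxy => by
      have hx' : 0 ≤ x := (Real.sqrt_nonneg t).trans (le_of_lt hx)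
      have hy' : 0 ≤ y := (Real.sqrt_nonneg t).trans (le_of_lt hy)
      exact (pow_left_inj₀ hx' hy' two_ne_zero).1 hxy) (pq n l)
  rw [him] at h
  rw [h]
  unfold marcumQ
  split_ifs with h0
  · have : l = 0 := (Real.sqrt_eq_zero hl).1 h0
    subst this
    refine setIntegral_congr_fun measurableSet_Ioi fun x hx => ?_
    have hx' : 0 < x := (Real.sqrt_nonneg t).trans_lt hx
    simp only [pq_zero, gp, smul_eq_mul]
    rw [abs_of_pos (by positivity)]
    simp only [Nat.add_sub_cancel]
    rw [show 2 * (n + 1) - 1 = 2 * n + 1 by omega]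
    have h2 := Nat.factorial_ne_zero n
    field_simp
    ring
  · refine setIntegral_congr_fun measurableSet_Ioi fun x hx => ?_
    have hx' : 0 < x := (Real.sqrt_nonneg t).trans_lt hx
    have hl' : 0 < Real.sqrt l := lt_of_le_of_ne (Real.sqrt_nonneg l) (Ne.symm h0)
    have := bessel_eq n hl' hx'
    rw [Real.sq_sqrt hl] at this
    simp only [Nat.add_sub_cancel, smul_eq_mul]
    rw [abs_of_pos (by positivity), Real.sq_sqrt hl]
    linear_combination x * this

lemma pdf_eq (n : ℕ) {l t : ℝ} (hl : 0 ≤ l) (ht : 0 < t) : ncChiSqPdf (n + 1) l t = pq n l t := by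
  unfold ncChiSqPdf
  split_ifs with h0
  · subst h0
    rw [pq_zero, gp]
    push_cast
    rw [Real.Gamma_nat_eq_factorial]
  · have hl' : 0 < l := lt_of_le_of_ne hl (Ne.symm h0)
    have := bessel_eq n (Real.sqrt_pos.2 hl') (Real.sqrt_pos.2 ht)
    rw [Real.sq_sqrt hl, Real.sq_sqrt ht.le] at this
    rw [Real.sqrt_mul hl, Nat.add_sub_cancel]
    have e : (t / l) ^ ((((n + 1 : ℕ) : ℝ) - 1) / 2) = (Real.sqrt t / Real.sqrt l) ^ n := by
      rw [← Real.sqrt_div ht.le, Real.sqrt_eq_rpow, ← Real.rpow_natCast, ← Real.rpow_mul (by positivity)]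
      congr 1; push_cast; ring_nf
    rw [e]
    linear_combination (1 / 2) * this

lemma pdf_neg (n : ℕ) {l t : ℝ} (hl : l < 0) (ht : 0 < t) : ncChiSqPdf (n + 2) l t = 0 := by
  unfold ncChiSqPdf
  rw [if_neg hl.ne, Real.sqrt_eq_zero_of_nonpos (mul_nonpos_of_nonpos_of_nonneg hl.le ht.le)]
  have : besselI (n + 2 - 1) 0 = 0 := by
    unfold besselI
    simp
  rw [this, mul_zero]

/-! ### Densities supported on the positive half line -/

noncomputable def pd (d : ℝ → ℝ) (h : ℝ) : ENNReal := ENNReal.ofReal (if 0 < h then d h else 0)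

lemma pd_meas {d : ℝ → ℝ} (hd : Measurable d) : Measurable (pd d) :=
  ENNReal.measurable_ofReal.comp (Measurable.ite measurableSet_Ioi hd measurable_const)

lemma pd_smul {d : ℝ → ℝ} (h0 : ∀ t, 0 < t → 0 ≤ d t) (g : ℝ → ℝ) :
    (fun t => (pd d t).toReal • g t) = indicator (Ioi 0) (fun t => d t * g t) := by
  ext t
  unfold pd
  by_cases ht : 0 < t
  · simp [ht, ENNReal.toReal_ofReal (h0 t ht)]
  · simp [ht]

lemma pd_integral {d : ℝ → ℝ} (hd : Measurable d) (h0 : ∀ t, 0 < t → 0 ≤ d t) (g : ℝ → ℝ) :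
    ∫ t, g t ∂(volume.withDensity (pd d)) = ∫ t in Ioi 0, d t * g t := by
  rw [integral_withDensity_eq_integral_toReal_smul (pd_meas hd)
    (ae_of_all _ fun _ => ENNReal.ofReal_lt_top), pd_smul h0, integral_indicator measurableSet_Ioi]

lemma pd_integrable {d : ℝ → ℝ} (hd : Measurable d) (h0 : ∀ t, 0 < t → 0 ≤ d t) (g : ℝ → ℝ) :
    Integrable g (volume.withDensity (pd d)) ↔ IntegrableOn (fun t => d t * g t) (Ioi 0) := by
  rw [integrable_withDensity_iff_integrable_smul' (pd_meas hd)
    (ae_of_all _ fun _ => ENNReal.ofReal_lt_top), pd_smul h0, integrable_indicator_iff measurableSet_Ioi]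

lemma pd_indicator (d : ℝ → ℝ) : pd d = indicator (Ioi 0) (fun t => ENNReal.ofReal (d t)) := by
  ext t
  unfold pd
  by_cases ht : 0 < t <;> simp [ht]

lemma pd_Iic {d : ℝ → ℝ} (hd : Continuous d) (h0 : ∀ t, 0 < t → 0 ≤ d t) (t : ℝ) :
    (volume.withDensity (pd d)) (Iic t) = ENNReal.ofReal (∫ s in (0:ℝ)..(max t 0), d s) := by
  rw [withDensity_apply _ measurableSet_Iic, pd_indicator, setLIntegral_indicator measurableSet_Ioi,
    intervalIntegral.integral_of_le (le_max_right _ _), Ioi_inter_Iic]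
  rw [show Ioc 0 t = Ioc 0 (max t 0) by
    rcases le_total t 0 with h | h
    · rw [max_eq_right h, Ioc_self, Ioc_eq_empty (not_lt.2 h)]
    · rw [max_eq_left h]]
  rw [ofReal_integral_eq_lintegral_ofReal]
  · exact hd.integrableOn_Ioc
  · exact (ae_restrict_iff' measurableSet_Ioc).2 (ae_of_all _ fun s hs => h0 s hs.1)

lemma nc_eq (n : ℕ) {l : ℝ} (hl : 0 ≤ l) :
    ncChiSq (n + 1) l = volume.withDensity (pd (pq n l)) := by
  unfold ncChiSq pd
  congr 1; ext h
  split_ifs with hh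
  · rw [pdf_eq n hl hh]
  · rfl

lemma nc_neg (n : ℕ) {l : ℝ} (hl : l < 0) : ncChiSq (n + 2) l = 0 := by
  unfold ncChiSq
  rw [show (fun h => ENNReal.ofReal (if 0 < h then ncChiSqPdf (n + 2) l h else 0)) = 0 from ?_]
  · exact withDensity_zero
  · ext h
    split_ifs with hh
    · rw [pdf_neg n hl hh]; simp
    · simp

lemma pq_prob (n : ℕ) {l : ℝ} (hl : 0 ≤ l) :
    IsProbabilityMeasure (volume.withDensity (pd (pq n l))) := by
  constructor
  rw [withDensity_apply _ MeasurableSet.univ, pd_indicator, setLIntegral_indicator measurableSet_Ioi,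
    inter_univ, ← ofReal_integral_eq_lintegral_ofReal (pq_int n hl), pq_int_one n hl, ENNReal.ofReal_one]
  exact (ae_restrict_iff' measurableSet_Ioi).2 (ae_of_all _ fun s hs => pq_nonneg n hl (le_of_lt hs))

/-! ### Law of the maximum -/

noncomputable def Fc (n : ℕ) (l t : ℝ) : ℝ := ∫ s in (0:ℝ)..t, pq n l s

lemma Fc_cont (n : ℕ) : Continuous (fun z : ℝ × ℝ => Fc n z.1 z.2) := by
  unfold Fc
  refine intervalIntegral.continuous_parametric_intervalIntegral_of_continuous (μ := volume)
    (f := fun (z : ℝ × ℝ) s => pq n z.1 s) (s := fun z : ℝ × ℝ => z.2) ?_ continuous_snd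
  exact (pq_cont n).comp (by fun_prop : Continuous fun y : (ℝ × ℝ) × ℝ => (y.1.1, y.2))

lemma Fc_cont' (n : ℕ) (l : ℝ) : Continuous (Fc n l) :=
  (Fc_cont n).comp (by fun_prop : Continuous fun t : ℝ => (l, t))

lemma Fc_nonneg (n : ℕ) {l t : ℝ} (hl : 0 ≤ l) (ht : 0 ≤ t) : 0 ≤ Fc n l t :=
  intervalIntegral.integral_nonneg ht fun _ hs => pq_nonneg n hl hs.1

lemma Fc_eq (n : ℕ) {l t : ℝ} (hl : 0 ≤ l) (ht : 0 ≤ t) :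
    Fc n l t = 1 - ∫ s in Ioi t, pq n l s := by
  rw [← pq_int_one n hl, Fc, intervalIntegral.integral_of_le ht, eq_sub_iff_add_eq,
    ← setIntegral_union Ioc_disjoint_Ioi_same measurableSet_Ioi, Ioc_union_Ioi_eq_Ioi ht]
  · exact (pq_int n hl).mono_set Ioc_subset_Ioi_self
  · exact (pq_int n hl).mono_set (Ioi_subset_Ioi ht)

lemma Fc_deriv (n : ℕ) (l t : ℝ) : HasDerivAt (Fc n l) (pq n l t) t :=
  intervalIntegral.integral_hasDerivAt_right ((pq_cont' n l).intervalIntegrable _ _)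
    ((pq_cont' n l).stronglyMeasurableAtFilter _ _) (pq_cont' n l).continuousAt

noncomputable def Dn (K n : ℕ) (l t : ℝ) : ℝ := K * Fc n l t ^ (K - 1) * pq n l t

lemma Dn_cont (K n : ℕ) : Continuous (fun z : ℝ × ℝ => Dn K n z.1 z.2) := by
  have := Fc_cont n
  have := pq_cont n
  unfold Dn; fun_prop

lemma Dn_cont' (K n : ℕ) (l : ℝ) : Continuous (Dn K n l) :=
  (Dn_cont K n).comp (by fun_prop : Continuous fun t : ℝ => (l, t))

lemma Dn_nonneg (K n : ℕ) {l t : ℝ} (hl : 0 ≤ l) (ht : 0 ≤ t) : 0 ≤ Dn K n l t := by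
  have := Fc_nonneg n hl ht
  have := pq_nonneg n hl ht
  unfold Dn; positivity

lemma Dn_int (K n : ℕ) (hK : 1 ≤ K) (l t : ℝ) : ∫ s in (0:ℝ)..t, Dn K n l s = Fc n l t ^ K := by
  have h := intervalIntegral.integral_eq_sub_of_hasDerivAt (a := 0) (b := t)
    (f := fun s => Fc n l s ^ K) (f' := Dn K n l)
    (fun s _ => (Fc_deriv n l s).pow K) ((Dn_cont' K n l).intervalIntegrable _ _)
  rw [h]
  have : Fc n l 0 = 0 := by simp [Fc]
  rw [this, zero_pow (by omega), sub_zero]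

lemma sup_meas (K : ℕ) : Measurable (fun y : Fin K → ℝ => ⨆ k, y k) :=
  Measurable.iSup fun k => measurable_pi_apply k

lemma sup_law (K n : ℕ) (hK : 1 ≤ K) {l : ℝ} (hl : 0 ≤ l) :
    Measure.map (fun y : Fin K → ℝ => ⨆ k, y k)
      (Measure.pi fun _ => volume.withDensity (pd (pq n l))) =
      volume.withDensity (pd (Dn K n l)) := by
  have := pq_prob n hl
  have : Nonempty (Fin K) := ⟨⟨0, hK⟩⟩
  have := Measure.isProbabilityMeasure_map (μ := Measure.pi fun _ : Fin K => volume.withDensity (pd (pq n l)))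
    (sup_meas K).aemeasurable
  refine Measure.ext_of_Iic _ _ fun t => ?_
  rw [Measure.map_apply (sup_meas K) measurableSet_Iic,
    pd_Iic (Dn_cont' K n l) (fun t ht => Dn_nonneg K n hl ht.le), Dn_int K n hK]
  have e : (fun y : Fin K → ℝ => ⨆ k, y k) ⁻¹' Iic t = univ.pi fun _ => Iic t := by
    ext y
    simp only [mem_preimage, mem_Iic, mem_univ_pi]
    exact ciSup_le_iff (Set.finite_range y).bddAbove
  rw [e, Measure.pi_pi, Finset.prod_const, Finset.card_univ, Fintype.card_fin,
    pd_Iic (pq_cont' n l) (fun t ht => pq_nonneg n hl ht.le)]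
  exact (ENNReal.ofReal_pow (Fc_nonneg n hl (le_max_right t 0)) K).symm

lemma sup_integral (K n : ℕ) (hK : 1 ≤ K) {l : ℝ} (hl : 0 ≤ l) {g : ℝ → ℝ} (hg : Measurable g) :
    ∫ y : Fin K → ℝ, g (⨆ k, y k) ∂(Measure.pi fun _ => ncChiSq (n + 1) l) =
      ∫ t in Ioi 0, Dn K n l t * g t := by
  rw [nc_eq n hl, ← pd_integral (Dn_cont' K n l).measurable (fun t ht => Dn_nonneg K n hl ht.le),
    ← sup_law K n hK hl, integral_map (sup_meas K).aemeasurable hg.aestronglyMeasurable]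

lemma sup_integrable (K n : ℕ) (hK : 1 ≤ K) {l : ℝ} (hl : 0 ≤ l) :
    Integrable (fun y : Fin K → ℝ => ⨆ k, y k) (Measure.pi fun _ => ncChiSq (n + 1) l) ↔
      IntegrableOn (fun t => Dn K n l t * t) (Ioi 0) := by
  rw [nc_eq n hl, ← pd_integrable (Dn_cont' K n l).measurable (fun t ht => Dn_nonneg K n hl ht.le) (fun t => t),
    ← sup_law K n hK hl, integrable_map_measure (g := fun t : ℝ => t) measurable_id.aestronglyMeasurable (sup_meas K).aemeasurable]
  rfl

lemma gamma_eq (n : ℕ) : gammaMeasure ((n + 1 : ℕ) : ℝ) (1 / 2) = volume.withDensity (pd (gp n)) := by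
  unfold gammaMeasure
  refine withDensity_congr_ae ?_
  have : ∀ᵐ x : ℝ, x ≠ 0 := by simp [ae_iff]
  filter_upwards [this] with x hx
  rcases lt_or_gt_of_ne hx with h | h
  · rw [gammaPDF_of_neg h, pd, if_neg (not_lt.2 h.le), ENNReal.ofReal_zero]
  · rw [gammaPDF_of_nonneg h.le, pd, if_pos h, gp]
    congr 1
    push_cast
    rw [Real.Gamma_nat_eq_factorial, add_sub_cancel_right, Real.rpow_natCast, ← Nat.cast_succ,
      Real.rpow_natCast, show -(1 / 2 * x) = -x / 2 by ring]
    field_simp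
    rw [Nat.succ_eq_add_one, ← mul_pow]; norm_num

/-- Expected maximum harvested (normalized) power: `E[Z]` equals the double integral
`∫_0^∞ K t ∫_0^∞ r^{N-1}e^{-r/2}/(2^{N+1}Γ(N)) (1-Q_N)^{K-1}(Q_N - Q_{N-1}) dr dt`,
provided `Z = max_k Y_k` is integrable. -/
theorem stmt7 (N K : ℕ) (hN : 2 ≤ N) (hK : 1 ≤ K) (μ : ℝ) (hμ : μ ∈ Set.Ioo (0 : ℝ) 1)
    (κ : Kernel ℝ (Fin K → ℝ))
    (hκ : ∀ r, κ r = Measure.pi fun _ => ncChiSq N (μ ^ 2 / (1 - μ ^ 2) * r))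
    (hint : Integrable (fun p : ℝ × (Fin K → ℝ) => ⨆ k, p.2 k) (gammaMeasure N (1 / 2) ⊗ₘ κ)) :
    ∫ p : ℝ × (Fin K → ℝ), (⨆ k, p.2 k) ∂(gammaMeasure N (1 / 2) ⊗ₘ κ)
      = ∫ t in Ioi 0, K * t *
          ∫ r in Ioi 0,
            r ^ (N - 1) * Real.exp (-r / 2) / (2 ^ (N + 1) * Real.Gamma N)
              * (1 - marcumQ N (Real.sqrt (μ ^ 2 / (1 - μ ^ 2) * r)) (Real.sqrt t)) ^ (K - 1)
              * (marcumQ N (Real.sqrt (μ ^ 2 / (1 - μ ^ 2) * r)) (Real.sqrt t)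
                  - marcumQ (N - 1) (Real.sqrt (μ ^ 2 / (1 - μ ^ 2) * r)) (Real.sqrt t)) := by
  obtain ⟨n, rfl⟩ : ∃ n, N = n + 2 := ⟨N - 2, by omega⟩
  have hc : 0 < μ ^ 2 / (1 - μ ^ 2) := by
    obtain ⟨h1, h2⟩ := hμ
    have : 0 < 1 - μ ^ 2 := by nlinarith
    positivity
  set c := μ ^ 2 / (1 - μ ^ 2) with hcdef
  clear_value c
  have hfin : IsFiniteKernel κ := by
    refine ⟨1, ENNReal.one_lt_top, fun r => ?_⟩
    rw [hκ r]
    rcases lt_or_ge r 0 with hr | hr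
    · rw [nc_neg n (mul_neg_of_pos_of_neg hc hr)]
      rw [← Set.pi_univ univ, Measure.pi_pi]
      simp only [Measure.coe_zero, Pi.zero_apply, Finset.prod_const, Finset.card_univ, Fintype.card_fin]
      rw [zero_pow (by omega)]; exact zero_le_one
    · have := pq_prob (n + 1) (mul_nonneg hc.le hr)
      rw [nc_eq (n + 1) (mul_nonneg hc.le hr)]
      exact prob_le_one
  have hγ := gamma_eq (n + 1)
  have hprob : IsProbabilityMeasure (gammaMeasure ((n + 2 : ℕ) : ℝ) (1 / 2)) :=
    isProbabilityMeasure_gammaMeasure (by positivity) (by norm_num)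
  have hgm := (gp_cont (n + 1)).measurable
  have hg0 : ∀ t : ℝ, 0 < t → 0 ≤ gp (n + 1) t := fun t ht => gp_nonneg _ ht.le
  have hgpos : ∀ t : ℝ, 0 < t → 0 < gp (n + 1) t := fun t ht => by unfold gp; positivity
  rw [Measure.integral_compProd hint]
  obtain ⟨hi1, hi2⟩ := (Measure.integrable_compProd_iff hint.aestronglyMeasurable).1 hint
  rw [hγ] at hi1 hi2 ⊢
  rw [pd_integrable hgm hg0] at hi2
  rw [ae_withDensity_iff (pd_meas hgm)] at hi1
  rw [pd_integral hgm hg0]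
  simp only at hi1 hi2 ⊢
  have hE : ∀ r : ℝ, 0 < r → ∀ g : ℝ → ℝ, Measurable g →
      ∫ y : Fin K → ℝ, g (⨆ k, y k) ∂(κ r) = ∫ t in Ioi 0, Dn K (n + 1) (c * r) t * g t := by
    intro r hr g hg
    rw [hκ r, sup_integral K (n + 1) hK (mul_nonneg hc.le hr.le) hg]
  have hcont : Continuous (Function.uncurry fun r t : ℝ => gp (n + 1) r * (Dn K (n + 1) (c * r) t * t)) := by
    have h1 := gp_cont (n + 1)
    have h2 : Continuous (fun z : ℝ × ℝ => Dn K (n + 1) (c * z.1) z.2) :=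
      (Dn_cont K (n + 1)).comp (by fun_prop : Continuous fun z : ℝ × ℝ => (c * z.1, z.2))
    unfold Function.uncurry
    fun_prop
  have hI : Integrable (Function.uncurry fun r t : ℝ => gp (n + 1) r * (Dn K (n + 1) (c * r) t * t))
      ((volume.restrict (Ioi 0)).prod (volume.restrict (Ioi 0))) := by
    rw [integrable_prod_iff hcont.aestronglyMeasurable]
    simp only [Function.uncurry]
    constructor
    · rw [ae_restrict_iff' measurableSet_Ioi]
      filter_upwards [hi1] with r hr hr0
      have hr0' : 0 < r := hr0
      refine Integrable.const_mul ?_ _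
      have h3 := hr (by
        rw [pd, if_pos hr0']
        exact (ENNReal.ofReal_pos.2 (hgpos r hr0')).ne')
      rw [hκ r] at h3
      exact (sup_integrable K (n + 1) hK (mul_nonneg hc.le hr0'.le)).1 h3
    · refine IntegrableOn.congr_fun hi2 ?_ measurableSet_Ioi
      intro r hr
      have hr0 : 0 < r := hr
      simp only
      rw [hE r hr0 (fun t => ‖t‖) measurable_norm, ← integral_const_mul]
      refine setIntegral_congr_fun measurableSet_Ioi fun t ht => ?_
      have ht0 : 0 < t := ht
      simp only [norm_mul]
      rw [Real.norm_of_nonneg (hg0 r hr0),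
        Real.norm_of_nonneg (Dn_nonneg K (n + 1) (mul_nonneg hc.le hr0.le) ht0.le)]
  have hL : ∫ r in Ioi (0:ℝ), gp (n + 1) r * ∫ y : Fin K → ℝ, (⨆ k, y k) ∂(κ r) =
      ∫ r in Ioi (0:ℝ), ∫ t in Ioi (0:ℝ), gp (n + 1) r * (Dn K (n + 1) (c * r) t * t) := by
    refine setIntegral_congr_fun measurableSet_Ioi fun r hr => ?_
    rw [hE r hr (fun t => t) measurable_id, integral_const_mul]
  rw [hL, integral_integral_swap hI]
  refine setIntegral_congr_fun measurableSet_Ioi fun t ht => ?_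
  have ht0 : 0 ≤ t := le_of_lt ht
  rw [← integral_const_mul]
  refine setIntegral_congr_fun measurableSet_Ioi fun r hr => ?_
  have hl : 0 ≤ c * r := mul_nonneg hc.le (le_of_lt hr)
  rw [show n + 2 - 1 = n + 1 by omega, marcum_eq (n + 1) hl ht0, marcum_eq n hl ht0, pq_rec n hl ht0,
    ← Fc_eq (n + 1) hl ht0, show ((n + 2 : ℕ) : ℝ) = ((n + 1 : ℕ) : ℝ) + 1 by push_cast; ring,
    Real.Gamma_nat_eq_factorial]
  unfold gp Dn
  field_simp
  try ring
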